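/- Let G be a finite simple graph, S a set of vertices of G, L a list assignment with |L(v)| = 10 for all vertices, and α and β two L-colorings of G that agree on every vertex outside S. Suppose there is an ordering v_1, …, v_n of S such that for each i, d_G(v_i) + |{ j > i : v_j is adjacent to v_i }| ≤ 9, where d_G denotes degree in G. Then G has a recoloring sequence from α to β that recolors each vertex of S at most twice and recolors no vertex outside S. -/

import Mathlib

def IsLColoring {V : Type} (G : SimpleGraph V) (L : V → Finset ℕ) (φ : V → ℕ) : Prop :=
  (∀ v, φ v ∈ L v) ∧ ∀ ⦃u w : V⦄, G.Adj u w → φ u ≠ φ w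

def recolorCount {V : Type} {m : ℕ} (φ : Fin (m + 1) → V → ℕ) (v : V) : ℕ :=
  (Finset.univ.filter fun i : Fin m => φ i.castSucc v ≠ φ i.succ v).card

def IsRecolSeq {V : Type} (G : SimpleGraph V) (L : V → Finset ℕ) {m : ℕ}
    (φ : Fin (m + 1) → V → ℕ) (α β : V → ℕ) : Prop :=
  φ 0 = α ∧ φ (Fin.last m) = β ∧ (∀ i, IsLColoring G L (φ i)) ∧
    ∀ i : Fin m, ∃! v : V, φ i.castSucc v ≠ φ i.succ v

/-!
Induct on the ordering. Pick for `v = v_1` a color `x ∈ L v` avoiding `α` on all neighbors of `v`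
and `β` on the neighbors later in the ordering; since `α = β` outside `S`, recoloring `v` with `x`
keeps both `α` and `β` proper. The two new colorings agree at `v`, so by induction the rest of `S`
can be recolored while `v` rests at `x`, and `v` itself moves only in the first and last steps.
-/

open Finset Function

theorem exists_mem_ne_of_card_add_card_lt {ι κ C : Type*} {A : Finset C} {s : Finset ι}
    {t : Finset κ} (a : ι → C) (b : κ → C) (h : #s + #t < #A) :
    ∃ x ∈ A, (∀ i ∈ s, x ≠ a i) ∧ ∀ j ∈ t, x ≠ b j := by
  classical
  have hcard : #(s.image a ∪ t.image b) < #A :=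
    ((card_union_le _ _).trans (add_le_add card_image_le card_image_le)).trans_lt h
  obtain ⟨x, hxA, hx⟩ := exists_mem_notMem_of_card_lt_card hcard
  refine ⟨x, hxA, fun i hi hxi => hx ?_, fun j hj hxj => hx ?_⟩
  · exact mem_union_left _ (mem_image.2 ⟨i, hi, hxi.symm⟩)
  · exact mem_union_right _ (mem_image.2 ⟨j, hj, hxj.symm⟩)

theorem IsLColoring.update {V : Type} [DecidableEq V] {G : SimpleGraph V} {L : V → Finset ℕ}
    {α : V → ℕ} {v : V} {x : ℕ} (hα : IsLColoring G L α) (hx : x ∈ L v)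
    (hne : ∀ w, G.Adj v w → x ≠ α w) : IsLColoring G L (update α v x) := by
  refine ⟨fun u => ?_, fun u w huw => ?_⟩
  · rcases eq_or_ne u v with rfl | hu
    · rwa [update_self]
    · rw [update_of_ne hu]
      exact hα.1 u
  · rcases eq_or_ne u v with rfl | hu
    · rw [update_self, update_of_ne huw.ne']
      exact hne w huw
    · rcases eq_or_ne w v with rfl | hw
      · rw [update_self, update_of_ne hu]
        exact (hne u huw.symm).symm
      · rw [update_of_ne hu, update_of_ne hw]
        exact hα.2 huw

section RecoloringSequence

variable {V : Type} {G : SimpleGraph V} {L : V → Finset ℕ} {α β γ : V → ℕ} {m : ℕ}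
  {φ : Fin (m + 1) → V → ℕ}

theorem recolorCount_cons (α : V → ℕ) (φ : Fin (m + 1) → V → ℕ) (v : V) :
    recolorCount (Fin.cons α φ : Fin (m + 1 + 1) → V → ℕ) v =
      (if α v ≠ φ 0 v then 1 else 0) + recolorCount φ v := by
  simp only [recolorCount, Fin.card_filter_univ_succ', Fin.castSucc_zero, Fin.cons_zero,
    Fin.cons_succ, Fin.castSucc_succ]

theorem recolorCount_comp_rev (φ : Fin (m + 1) → V → ℕ) (v : V) :
    recolorCount (φ ∘ Fin.rev) v = recolorCount φ v := by
  refine card_equiv Fin.revPerm fun i => ?_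
  simp [Fin.rev_castSucc, Fin.rev_succ, ne_comm]

theorem IsRecolSeq.cons (h : IsRecolSeq G L φ β γ) (hα : IsLColoring G L α)
    (hαβ : ∃! v, α v ≠ β v) :
    IsRecolSeq G L (Fin.cons α φ : Fin (m + 1 + 1) → V → ℕ) α γ := by
  obtain ⟨hfirst, hlast, hcol, hstep⟩ := h
  refine ⟨rfl, hlast, Fin.cases hα hcol, Fin.cases ?_ hstep⟩
  simpa [hfirst] using hαβ

theorem IsRecolSeq.comp_rev (h : IsRecolSeq G L φ α β) : IsRecolSeq G L (φ ∘ Fin.rev) β α := by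
  obtain ⟨hfirst, hlast, hcol, hstep⟩ := h
  refine ⟨by simp [hlast], by simp [hfirst], fun i => hcol i.rev, fun i => ?_⟩
  simpa [Fin.rev_castSucc, Fin.rev_succ, ne_comm] using hstep i.rev

/-- Some recoloring sequence from `α` to `β` recolors each vertex `v` at most `c v` times. -/
def RecolorableWithin (G : SimpleGraph V) (L : V → Finset ℕ) (α β : V → ℕ) (c : V → ℕ) : Prop :=
  ∃ (m : ℕ) (φ : Fin (m + 1) → V → ℕ), IsRecolSeq G L φ α β ∧ ∀ v, recolorCount φ v ≤ c v

namespace RecolorableWithin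

variable {c : V → ℕ}

theorem refl (hα : IsLColoring G L α) (c : V → ℕ) : RecolorableWithin G L α α c :=
  ⟨0, fun _ => α, ⟨rfl, rfl, fun _ => hα, fun i => i.elim0⟩, fun v => Nat.zero_le (c v)⟩

theorem symm (h : RecolorableWithin G L α β c) : RecolorableWithin G L β α c := by
  obtain ⟨m, φ, hφ, hc⟩ := h
  exact ⟨m, φ ∘ Fin.rev, hφ.comp_rev, fun v => (recolorCount_comp_rev φ v).trans_le (hc v)⟩

variable [DecidableEq V] {v : V} {x : ℕ}

theorem of_update_left (hα : IsLColoring G L α)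
    (h : RecolorableWithin G L (update α v x) β c) :
    RecolorableWithin G L α β (c + Pi.single v 1) := by
  obtain ⟨m, φ, hφ, hc⟩ := h
  by_cases hx : α v = x
  · rw [← hx, update_eq_self] at hφ
    exact ⟨m, φ, hφ, fun u => (hc u).trans (Nat.le_add_right _ _)⟩
  · have hdiff : ∃! u, α u ≠ update α v x u :=
      ⟨v, by simpa using hx, fun u hu => by_contra fun huv => hu (update_of_ne huv x α).symm⟩
    refine ⟨m + 1, Fin.cons α φ, hφ.cons hα hdiff, fun u => ?_⟩
    rw [recolorCount_cons, hφ.1, add_comm, Pi.add_apply]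
    refine add_le_add (hc u) ?_
    rcases eq_or_ne u v with rfl | huv
    · rw [Pi.single_eq_same]
      split_ifs <;> simp
    · simp [huv]

theorem of_update_right (hβ : IsLColoring G L β)
    (h : RecolorableWithin G L α (update β v x) c) :
    RecolorableWithin G L α β (c + Pi.single v 1) :=
  (h.symm.of_update_left hβ).symm

end RecolorableWithin

end RecoloringSequence

section Ordering

variable {V : Type} (G : SimpleGraph V) [G.LocallyFinite] (L : V → Finset ℕ) {α β : V → ℕ}

theorem exists_isLColoring_update_and_update [DecidableEq V] {v : V} (hα : IsLColoring G L α)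
    (hβ : IsLColoring G L β)
    (hv : G.degree v + #{w ∈ G.neighborFinset v | α w ≠ β w} < #(L v)) :
    ∃ x, IsLColoring G L (update α v x) ∧ IsLColoring G L (update β v x) := by
  obtain ⟨x, hxL, hxα, hxβ⟩ := exists_mem_ne_of_card_add_card_lt α β hv
  simp only [mem_filter, SimpleGraph.mem_neighborFinset] at hxα hxβ
  refine ⟨x, hα.update hxL hxα, hβ.update hxL fun w hw => ?_⟩
  by_cases hαβ : α w = β w
  · exact hαβ ▸ hxα w hw
  · exact hxβ w ⟨hw, hαβ⟩

variable [DecidableRel G.Adj]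

theorem card_filter_ne_neighborFinset_le {ι C : Type*} [Fintype ι] [DecidableEq C] {f : ι → V}
    {a b : V → C} (hagree : ∀ v ∉ Set.range f, a v = b v) (v : V) :
    #{w ∈ G.neighborFinset v | a w ≠ b w} ≤ #{j | G.Adj v (f j)} := by
  refine card_le_card_of_surjOn f fun w hw => ?_
  rw [mem_coe, mem_filter, SimpleGraph.mem_neighborFinset] at hw
  obtain ⟨j, rfl⟩ := not_imp_comm.1 (hagree w) hw.2
  exact ⟨j, by simpa using hw.1, rfl⟩

theorem recolorableWithin_two_mul_card_fiber [DecidableEq V] {n : ℕ} (f : Fin n → V)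
    (hf : ∀ i, G.degree (f i) + #{j | i < j ∧ G.Adj (f i) (f j)} < #(L (f i)))
    (hα : IsLColoring G L α) (hβ : IsLColoring G L β) (hagree : ∀ v ∉ Set.range f, α v = β v) :
    RecolorableWithin G L α β fun v => 2 * #{i | f i = v} := by
  induction n generalizing α β with
  | zero =>
    obtain rfl : α = β := funext fun v => hagree v (by simp)
    exact .refl hα _
  | succ n ih =>
    have hlater_zero : #{j | G.Adj (f 0) (f j)} ≤ #{j | 0 < j ∧ G.Adj (f 0) (f j)} :=
      card_le_card <| monotone_filter_right _ fun j _ hj =>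
        ⟨Fin.pos_of_ne_zero fun h => hj.ne (congrArg f h.symm), hj⟩
    have hdisagree := (card_filter_ne_neighborFinset_le G hagree (f 0)).trans hlater_zero
    obtain ⟨x, hαx, hβx⟩ := exists_isLColoring_update_and_update G L hα hβ
      ((Nat.add_le_add_left hdisagree _).trans_lt (hf 0))
    have hagree' : ∀ w ∉ Set.range fun i : Fin n => f i.succ,
        update α (f 0) x w = update β (f 0) x w := by
      intro w hw
      rcases eq_or_ne w (f 0) with rfl | hw0
      · simp only [update_self]
      · simp only [update_of_ne hw0]
        exact hagree w fun ⟨i, hi⟩ =>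
          Fin.cases (fun h => hw0 h.symm) (fun i h => hw ⟨i, h⟩) i hi
    have hlater_succ (i : Fin n) : #{j | i.succ < j ∧ G.Adj (f i.succ) (f j)} =
        #{j | i < j ∧ G.Adj (f i.succ) (f j.succ)} := by
      rw [Fin.card_filter_univ_succ', if_neg (by simp), zero_add]
      simp only [Fin.succ_lt_succ_iff]
    have hrec := ih (fun i => f i.succ) (fun i => hlater_succ i ▸ hf i.succ) hαx hβx hagree'
    convert (hrec.of_update_left hα).of_update_right hβ using 2 with w
    rw [Fin.card_filter_univ_succ']
    rcases eq_or_ne w (f 0) with rfl | hw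
    · simp only [Pi.add_apply, Pi.single_eq_same, if_true]
      omega
    · simp [hw, hw.symm]

theorem stmt_2_general (S : Finset V) (α β : V → ℕ) (hα : IsLColoring G L α)
    (hβ : IsLColoring G L β) (hagree : ∀ v ∉ S, α v = β v) (e : Fin #S ≃ {x : V // x ∈ S})
    (horder : ∀ i, G.degree (e i).1 + #{j | i < j ∧ G.Adj (e i).1 (e j).1} < #(L (e i).1)) :
    ∃ (m : ℕ) (φ : Fin (m + 1) → V → ℕ),
      IsRecolSeq G L φ α β ∧ (∀ v ∈ S, recolorCount φ v ≤ 2) ∧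
      ∀ v ∉ S, recolorCount φ v = 0 := by
  classical
  have hfiber (v : V) : #{i | (e i).1 = v} = if v ∈ S then 1 else 0 := by
    split_ifs with hv
    · refine card_eq_one.2 ⟨e.symm ⟨v, hv⟩, ?_⟩
      ext i
      simp [Equiv.eq_symm_apply, Subtype.ext_iff]
    · exact card_eq_zero.2 (filter_eq_empty_iff.2 fun i _ hi => hv (hi ▸ (e i).2))
  obtain ⟨m, φ, hφ, hc⟩ := recolorableWithin_two_mul_card_fiber G L (fun i => (e i).1) horder
    hα hβ fun v hv => hagree v fun hvS => hv ⟨e.symm ⟨v, hvS⟩, by simp⟩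
  simp only [hfiber] at hc
  exact ⟨m, φ, hφ, fun v hv => by simpa [hv] using hc v, fun v hv => by simpa [hv] using hc v⟩

end Ordering

/-- if `α` and `β` are `L`-colorings (with all lists of size 10)
agreeing outside `S`, and `S` admits an ordering `v_1, …, v_n` in which each `v_i`
satisfies `d_G(v_i) + #{later neighbors in the ordering} ≤ 9`, then `G` has a
recoloring sequence from `α` to `β` that recolors each vertex of `S` at most
twice and no vertex outside `S`. -/
theorem stmt_2 {V : Type} [Fintype V] [DecidableEq V]
    (G : SimpleGraph V) [DecidableRel G.Adj]
    (L : V → Finset ℕ) (hL : ∀ v, (L v).card = 10)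
    (S : Finset V)
    (α β : V → ℕ) (hα : IsLColoring G L α) (hβ : IsLColoring G L β)
    (hagree : ∀ v : V, v ∉ S → α v = β v)
    (e : Fin S.card ≃ {x : V // x ∈ S})
    (horder : ∀ i : Fin S.card,
      G.degree (e i).1 +
        (Finset.univ.filter fun j : Fin S.card =>
          i < j ∧ G.Adj (e i).1 (e j).1).card ≤ 9) :
    ∃ (m : ℕ) (φ : Fin (m + 1) → V → ℕ),
      IsRecolSeq G L φ α β ∧ (∀ v ∈ S, recolorCount φ v ≤ 2) ∧
      ∀ v : V, v ∉ S → recolorCount φ v = 0 :=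
  stmt_2_general G L S α β hα hβ hagree e fun i => by
    rw [hL]; exact Nat.lt_succ_of_le (horder i)
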